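/- Let L_1,…,L_6 ⊆ ℂ^4 be 2-dimensional linear subspaces (lines in P^3) which are pairwise disjoint. Then there exists a nonzero homogeneous polynomial F of degree 72 in ℂ[x_0,x_1,x_2,x_3] with F ∈ I(L_i)^{19} for all i = 1,…,6; consequently α(I^{(19)}) ≤ 72, where I^{(m)} = ⋂_i I(L_i)^m, which gives the upper bound 72/19 for the Waldschmidt constant of six skew lines. -/

import Mathlib

open MvPolynomial

noncomputable section

abbrev C4 : Type := Fin 4 → ℂ
abbrev R3 : Type := MvPolynomial (Fin 4) ℂ

/-- The homogeneous ideal of the line in `P^3` corresponding to a linear subspace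
`L ⊆ ℂ^4`: all polynomials vanishing identically on `L`. -/
def lineIdeal (L : Submodule ℂ C4) : Ideal R3 where
  carrier := {F | ∀ v ∈ L, eval v F = 0}
  add_mem' := by
    intro a b ha hb v hv
    simp [ha v hv, hb v hv]
  zero_mem' := by
    intro v hv
    simp
  smul_mem' := by
    intro c F hF v hv
    simp [smul_eq_mul, hF v hv]

/-- The initial degree `α(J)` of an ideal `J`: the least `d` such that `J`
contains a nonzero homogeneous polynomial of degree `d`. -/
def alphaDeg (J : Ideal R3) : ℕ :=
  sInf {d | ∃ F ∈ J, F ≠ 0 ∧ MvPolynomial.IsHomogeneous F d}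

/-!
For a suitable decomposition `ℂ⁴ = ℂ² ⊕ ℂ²` all six lines are graphs `w = A i u`. Splitting the
lines into two triples and multiplying the quadrics through the triples gives quartics that contain
all six lines, so the determinant of a `3 × 3` matrix of linear combinations of five such quartics
is a form of degree `12` with multiplicity at least `3` along every line. If the matrix maps the
vector `(u₀², u₀ u₁, u₁²)` to something vanishing to second order along one chosen line, then
Cramer's rule raises the multiplicity along that line to `4`. For each row these are `2 * 6` linear
conditions on `5 * 3` coefficients, which leaves at least three independent rows to choose.

The determinant might vanish identically. For one explicit integral sextuple it does not. Any other
sextuple is joined to it by a pencil with parameter `t`, over which the three rows extend. The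
determinant over `k[t]` is nonzero, and once divided by the highest possible power of `t` it
specializes to a nonzero form at `t = 0` with the same multiplicities. The product of these forms
over the six choices of the line has degree `6 * 12 = 72` and multiplicity `4 + 5 * 3 = 19`.
-/

open Matrix

section Determinants

variable {n S : Type*} [Fintype n] [DecidableEq n] [CommRing S]

theorem det_mem_pow_sum {I : Ideal S} {M : Matrix n n S} {e : n → ℕ}
    (h : ∀ i j, M i j ∈ I ^ e j) : M.det ∈ I ^ ∑ j, e j := by
  rw [det_apply, ← Finset.prod_pow_eq_pow_sum]
  exact Ideal.sum_mem _ fun s _ =>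
    zsmul_mem (Ideal.prod_mem_prod fun j _ => h (s j) j) _

theorem mul_det_mem_pow_of_mulVec_mem_sq {I : Ideal S} {M : Matrix n n S} {v : n → S}
    (hM : ∀ i j, M i j ∈ I) (hv : ∀ i, (M *ᵥ v) i ∈ I ^ 2) (j : n) :
    v j * M.det ∈ I ^ (Fintype.card n + 1) := by
  have cramer : v j * M.det = (M.updateCol j (M *ᵥ v)).det := by
    rw [← cramer_apply, cramer_eq_adjugate_mulVec, mulVec_mulVec, adjugate_mul, smul_mulVec,
      one_mulVec, Pi.smul_apply, smul_eq_mul, mul_comm]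
  have exponents : ∑ i, (if i = j then 2 else 1) = Fintype.card n + 1 := by
    rw [← Finset.add_sum_erase _ _ (Finset.mem_univ j), if_pos rfl,
      Finset.sum_congr rfl fun i hi => if_neg (Finset.ne_of_mem_erase hi),
      ← Finset.card_eq_sum_ones, Finset.card_erase_of_mem (Finset.mem_univ j), Finset.card_univ]
    have := Fintype.card_pos_iff.2 ⟨j⟩
    omega
  rw [cramer, ← exponents]
  refine det_mem_pow_sum fun i l => ?_
  obtain rfl | hl := eq_or_ne l j
  · simpa using hv i
  · simpa [hl] using hM i l

theorem isHomogeneous_det {σ R : Type*} [CommRing R] {d : ℕ} {M : Matrix n n (MvPolynomial σ R)}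
    (h : ∀ i j, (M i j).IsHomogeneous d) : M.det.IsHomogeneous (Fintype.card n * d) := by
  rw [det_apply]
  refine IsHomogeneous.sum _ _ _ fun s _ => ?_
  have hs := IsHomogeneous.prod Finset.univ (fun i => M (s i) i) (fun _ => d) fun i _ => h (s i) i
  rw [Finset.sum_const, Finset.card_univ, smul_eq_mul] at hs
  obtain hsign | hsign := Int.units_eq_one_or s.sign <;> simp [hsign, hs, hs.neg]

end Determinants

theorem comp_mulVec {m n S T : Type*} [Fintype n] [NonAssocSemiring S] [NonAssocSemiring T]
    (f : S →+* T) (M : Matrix m n S) (v : n → S) : f ∘ (M *ᵥ v) = M.map f *ᵥ f ∘ v :=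
  funext (RingHom.map_mulVec f M v)

theorem exists_mulVec_eq_zero_lift {m n S T : Type*} [Fintype m] [DecidableEq m]
    [Fintype n] [CommRing S] [CommRing T]
    (f : S →+* T) (M : Matrix m n S) (N : Matrix n m S) (v : n → S) (hv : f ∘ (M *ᵥ v) = 0) :
    ∃ c : n → S, M *ᵥ c = 0 ∧ f ∘ c = f (M * N).det • (f ∘ v) := by
  refine ⟨(M * N).det • v - (N * (M * N).adjugate) *ᵥ (M *ᵥ v), ?_, ?_⟩
  · rw [mulVec_sub, mulVec_smul, mulVec_mulVec, ← Matrix.mul_assoc, mul_adjugate, smul_mulVec,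
      one_mulVec, sub_self]
  · have correction : f ∘ ((N * (M * N).adjugate) *ᵥ (M *ᵥ v)) = 0 := by
      rw [comp_mulVec, hv, mulVec_zero]
    ext i
    have := congrFun correction i
    simp_all

section GraphIdeal

variable {σ τ R S T : Type*} [Fintype σ] [CommRing R] [CommRing S] [CommRing T]

/-- The ideal generated by the entries of `w - A u`, for vectors `u` and `w` over any ring. -/
def graphIdealAt (A : Matrix τ σ S) (u : σ → S) (w : τ → S) : Ideal S :=
  Ideal.span (Set.range (w - A *ᵥ u))

/-- The homogeneous ideal of the linear subspace `w = A u`, where `u` and `w` are the vectors of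
variables indexed by `σ` and `τ`. -/
def graphIdeal (A : Matrix τ σ R) : Ideal (MvPolynomial (σ ⊕ τ) R) :=
  graphIdealAt (A.map C) (fun j => X (.inl j)) (fun i => X (.inr i))

theorem sub_mulVec_mem_graphIdealAt (A : Matrix τ σ S) (u : σ → S) (w : τ → S) (i : τ) :
    (w - A *ᵥ u) i ∈ graphIdealAt A u w :=
  Ideal.subset_span ⟨i, rfl⟩

theorem map_graphIdealAt (f : S →+* T) (A : Matrix τ σ S) (u : σ → S) (w : τ → S) :
    (graphIdealAt A u w).map f = graphIdealAt (A.map f) (f ∘ u) (f ∘ w) := by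
  rw [graphIdealAt, Ideal.map_span, ← Set.range_comp, graphIdealAt]
  congr 2
  ext i
  simp [RingHom.map_mulVec]

theorem map_graphIdeal (f : R →+* S) (A : Matrix τ σ R) :
    (graphIdeal A).map (MvPolynomial.map f) = graphIdeal (A.map f) := by
  rw [graphIdeal, map_graphIdealAt, graphIdeal]
  congr 1 <;> ext <;> simp

/-- The coordinate change `w ↦ w + A u`, after which `graphIdeal A` is generated by the
variables `w`, over the coefficient ring of polynomials in `u`. -/
def straighten (A : Matrix τ σ R) :
    MvPolynomial (σ ⊕ τ) R ≃ₐ[R] MvPolynomial τ (MvPolynomial σ R) :=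
  AlgEquiv.ofAlgHom
    (aeval (Sum.elim (fun j => C (X j)) fun i => X i + C ((A.map C *ᵥ X) i)))
    (aevalTower (rename Sum.inl) fun i => X (.inr i) - rename Sum.inl ((A.map C *ᵥ X) i))
    (by
      apply MvPolynomial.algHom_ext'
      · ext j
        simp
      · intro i
        simp [mulVec, dotProduct])
    (by
      apply MvPolynomial.algHom_ext
      rintro (j | i)
      · simp
      · simp)

theorem straighten_rename_inl (A : Matrix τ σ R) (b : MvPolynomial σ R) :
    straighten A (rename Sum.inl b) = C b := by
  have h := aeval_algebraMap_apply (MvPolynomial τ (MvPolynomial σ R))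
    (X : σ → MvPolynomial σ R) b
  rw [aeval_X_left_apply, algebraMap_eq] at h
  simpa [straighten, aeval_rename, Function.comp_def] using h

theorem map_straighten_graphIdeal (A : Matrix τ σ R) :
    (graphIdeal A).map (straighten A) = idealOfVars τ (MvPolynomial σ R) := by
  rw [graphIdeal, graphIdealAt, Ideal.map_span, ← Set.range_comp, idealOfVars]
  congr 2
  ext i
  simp [straighten, mulVec, dotProduct]

theorem mem_graphIdeal_pow_of_rename_mul_mem [IsDomain R] {A : Matrix τ σ R}
    {b : MvPolynomial σ R} (hb : b ≠ 0) {P : MvPolynomial (σ ⊕ τ) R} {m : ℕ}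
    (h : rename Sum.inl b * P ∈ graphIdeal A ^ m) : P ∈ graphIdeal A ^ m := by
  have mem_iff (Q : MvPolynomial (σ ⊕ τ) R) : Q ∈ graphIdeal A ^ m ↔
      straighten A Q ∈ idealOfVars τ (MvPolynomial σ R) ^ m := by
    rw [← map_straighten_graphIdeal A, ← Ideal.map_pow, Ideal.mem_map_of_equiv]
    simp
  rw [mem_iff, mem_pow_idealOfVars_iff'] at h ⊢
  intro x hx
  have := h x hx
  rw [map_mul, straighten_rename_inl, coeff_C_mul] at this
  exact (mul_eq_zero.1 this).resolve_left hb

end GraphIdeal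

theorem isHomogeneous_of_C_mul {σ R : Type*} [CommRing R] [IsDomain R] {r : R} (hr : r ≠ 0)
    {P : MvPolynomial σ R} {d : ℕ} (h : (C r * P).IsHomogeneous d) : P.IsHomogeneous d :=
  fun x hx => h (by rw [coeff_C_mul]; exact mul_ne_zero hr hx)

theorem exists_specialization {σ τ ι k : Type*} [Fintype σ] [Field k] (a : k)
    {A : ι → Matrix τ σ (Polynomial k)} {m : ι → ℕ} {d : ℕ}
    {P : MvPolynomial (σ ⊕ τ) (Polynomial k)} (hP : P ≠ 0) (hd : P.IsHomogeneous d)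
    (hmem : ∀ i, P ∈ graphIdeal (A i) ^ m i) :
    ∃ Q : MvPolynomial (σ ⊕ τ) k, Q ≠ 0 ∧ Q.IsHomogeneous d ∧
      ∀ i, Q ∈ graphIdeal ((A i).map (Polynomial.evalRingHom a)) ^ m i := by
  have hprime : Prime (C (Polynomial.X - Polynomial.C a) : MvPolynomial (σ ⊕ τ) (Polynomial k)) :=
    (prime_C_iff _).2 (Polynomial.prime_X_sub_C a)
  obtain ⟨n, P', hndvd, rfl⟩ := WfDvdMonoid.max_power_factor hP hprime.irreducible
  have hpow : (Polynomial.X - Polynomial.C a) ^ n ≠ 0 :=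
    pow_ne_zero n (Polynomial.X_sub_C_ne_zero a)
  rw [← C_pow] at hd hmem
  refine ⟨map (Polynomial.evalRingHom a) P', fun hzero => hndvd ?_,
    (isHomogeneous_of_C_mul hpow hd).map _, fun i => ?_⟩
  · refine (C_dvd_iff_dvd_coeff _ _).2 fun x => Polynomial.dvd_iff_isRoot.2 ?_
    simpa [coeff_map] using congrArg (coeff x) hzero
  · have hmem' : P' ∈ graphIdeal (A i) ^ m i :=
      mem_graphIdeal_pow_of_rename_mul_mem (b := C ((Polynomial.X - Polynomial.C a) ^ n))
        (C_ne_zero.2 hpow) (by simpa using hmem i)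
    rw [← map_graphIdeal, ← Ideal.map_pow]
    exact Ideal.mem_map_of_mem _ hmem'

section Quadric

variable {R S T : Type*} [CommRing R] [CommRing S] [CommRing T]

/-- The determinant `a ∧ b` of two plane vectors. -/
def cross (a b : Fin 2 → S) : S :=
  a 0 * b 1 - a 1 * b 0

/-- The matrix of the part of `quadric K L M` that is quadratic in `w - K u`. -/
def quadricHessian (K L M : Matrix (Fin 2) (Fin 2) S) : Matrix (Fin 2) (Fin 2) S :=
  (L - K) * (M - K).adjugate

/-- The matrix of the part of `quadric K L M` that is linear in `w - K u`. -/
def quadricGradient (K L M : Matrix (Fin 2) (Fin 2) S) : Matrix (Fin 2) (Fin 2) S :=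
  (L - K).det • (M - K) - (M - K).det • (L - K)

/-- The quadric through the three lines `w = K u`, `w = L u` and `w = M u`, evaluated at `(u, w)`.
The formula is its Taylor expansion along the first line. -/
def quadric (K L M : Matrix (Fin 2) (Fin 2) S) (u w : Fin 2 → S) : S :=
  cross (w - K *ᵥ u) (quadricHessian K L M *ᵥ (w - K *ᵥ u) + quadricGradient K L M *ᵥ u)

/-- The matrix `P` for which `quadric K L M` restricts to `cross ((A - K) u) (P u)` on the line
`w = A u`. -/
def quadricPolar (K L M A : Matrix (Fin 2) (Fin 2) S) : Matrix (Fin 2) (Fin 2) S :=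
  quadricHessian K L M * (A - K) + quadricGradient K L M

variable {K L M A : Matrix (Fin 2) (Fin 2) S} {u w : Fin 2 → S}

theorem quadric_rotate : quadric K L M u w = quadric L M K u w := by
  simp only [quadric, cross, quadricHessian, quadricGradient, mulVec, dotProduct, mul_apply,
    adjugate_fin_two, det_fin_two, Fin.sum_univ_two, Matrix.sub_apply,
    Matrix.smul_apply, smul_eq_mul, Pi.sub_apply, Pi.add_apply, of_apply, cons_val_zero,
    cons_val_one, cons_val', cons_val_fin_one]
  ring

theorem quadric_mulVec : quadric K L M u (A *ᵥ u) =
    cross ((A - K) *ᵥ u) (quadricPolar K L M A *ᵥ u) := by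
  rw [quadric, quadricPolar, ← sub_mulVec, mulVec_mulVec, ← add_mulVec]

theorem mulVec_mem {m n : Type*} [Fintype n] {I : Ideal S} {v : n → S} (A : Matrix m n S)
    (hv : ∀ j, v j ∈ I) (i : m) : (A *ᵥ v) i ∈ I :=
  Ideal.sum_mem _ fun j _ => I.mul_mem_left _ (hv j)

theorem cross_mem {I : Ideal S} {a : Fin 2 → S} (ha : ∀ i, a i ∈ I) (b : Fin 2 → S) :
    cross a b ∈ I :=
  I.sub_mem (I.mul_mem_right _ (ha 0)) (I.mul_mem_right _ (ha 1))

theorem quadric_mem_graphIdealAt_left : quadric K L M u w ∈ graphIdealAt K u w :=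
  cross_mem (sub_mulVec_mem_graphIdealAt K u w) _

theorem quadric_mem_graphIdealAt_middle : quadric K L M u w ∈ graphIdealAt L u w := by
  rw [quadric_rotate]
  exact quadric_mem_graphIdealAt_left

theorem quadric_mem_graphIdealAt_right : quadric K L M u w ∈ graphIdealAt M u w := by
  rw [quadric_rotate]
  exact quadric_mem_graphIdealAt_middle

theorem quadric_sub_cross_gradient_mem_sq :
    quadric K L M u w - cross (w - K *ᵥ u) (quadricGradient K L M *ᵥ u) ∈
      graphIdealAt K u w ^ 2 := by
  have hW := sub_mulVec_mem_graphIdealAt K u w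
  have hHW (i) : (quadricHessian K L M *ᵥ (w - K *ᵥ u)) i ∈ graphIdealAt K u w :=
    mulVec_mem _ hW i
  have expand : quadric K L M u w - cross (w - K *ᵥ u) (quadricGradient K L M *ᵥ u) =
      cross (w - K *ᵥ u) (quadricHessian K L M *ᵥ (w - K *ᵥ u)) := by
    simp only [quadric, cross, Pi.add_apply]
    ring
  rw [expand, sq]
  exact sub_mem (Ideal.mul_mem_mul (hW 0) (hHW 1)) (Ideal.mul_mem_mul (hW 1) (hHW 0))

theorem map_cross (f : S →+* T) (a b : Fin 2 → S) : f (cross a b) = cross (f ∘ a) (f ∘ b) := by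
  simp [cross]

theorem map_quadricHessian (f : S →+* T) : (quadricHessian K L M).map f =
    quadricHessian (K.map f) (L.map f) (M.map f) := by
  simp only [quadricHessian, ← RingHom.mapMatrix_apply, map_sub, map_mul,
    RingHom.map_adjugate]

theorem map_quadricGradient (f : S →+* T) : (quadricGradient K L M).map f =
    quadricGradient (K.map f) (L.map f) (M.map f) := by
  ext i j
  simp [quadricGradient, det_fin_two]

theorem map_quadricPolar (f : S →+* T) : (quadricPolar K L M A).map f =
    quadricPolar (K.map f) (L.map f) (M.map f) (A.map f) := by
  rw [quadricPolar, quadricPolar, ← map_quadricHessian, ← map_quadricGradient]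
  simp only [← RingHom.mapMatrix_apply, map_add, map_mul, map_sub]

theorem map_quadric (f : S →+* T) : f (quadric K L M u w) =
    quadric (K.map f) (L.map f) (M.map f) (f ∘ u) (f ∘ w) := by
  rw [quadric, map_cross, quadric, ← map_quadricHessian, ← map_quadricGradient]
  have comp_offset : f ∘ (w - K *ᵥ u) = f ∘ w - K.map f *ᵥ f ∘ u := by
    rw [← comp_mulVec]
    exact funext fun i => map_sub f _ _
  rw [← comp_offset, ← comp_mulVec, ← comp_mulVec]
  exact congrArg _ (funext fun i => map_add f _ _)

theorem quadric_sub_restriction_mem_graphIdealAt :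
    quadric K L M u w - quadric K L M u (A *ᵥ u) ∈ graphIdealAt A u w := by
  have hw : Ideal.Quotient.mk (graphIdealAt A u w) ∘ w =
      Ideal.Quotient.mk (graphIdealAt A u w) ∘ (A *ᵥ u) :=
    funext fun i => Ideal.Quotient.eq.2 (sub_mulVec_mem_graphIdealAt A u w i)
  rw [← Ideal.Quotient.eq, map_quadric, map_quadric, hw]

theorem isHomogeneous_map_C_mulVec {σ m n : Type*} [Fintype n] {d : ℕ}
    {v : n → MvPolynomial σ R} (hv : ∀ j, (v j).IsHomogeneous d) (A : Matrix m n R) (i : m) :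
    ((A.map C *ᵥ v) i).IsHomogeneous d :=
  IsHomogeneous.sum _ _ _ fun j _ => by simpa using (isHomogeneous_C σ (A i j)).mul (hv j)

theorem isHomogeneous_cross {σ : Type*} {d e : ℕ} {a b : Fin 2 → MvPolynomial σ R}
    (ha : ∀ i, (a i).IsHomogeneous d) (hb : ∀ i, (b i).IsHomogeneous e) :
    (cross a b).IsHomogeneous (d + e) :=
  ((ha 0).mul (hb 1)).sub ((ha 1).mul (hb 0))

theorem isHomogeneous_quadric {σ : Type*} {K L M : Matrix (Fin 2) (Fin 2) R} {d : ℕ}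
    {u w : Fin 2 → MvPolynomial σ R} (hu : ∀ i, (u i).IsHomogeneous d)
    (hw : ∀ i, (w i).IsHomogeneous d) :
    (quadric (K.map C) (L.map C) (M.map C) u w).IsHomogeneous (d + d) := by
  have hW (i) : ((w - K.map C *ᵥ u) i).IsHomogeneous d :=
    (hw i).sub (isHomogeneous_map_C_mulVec hu K i)
  rw [quadric, ← map_quadricHessian, ← map_quadricGradient]
  exact isHomogeneous_cross hW fun i =>
    (isHomogeneous_map_C_mulVec hW _ i).add (isHomogeneous_map_C_mulVec hu _ i)

end Quadric

section Surface

variable {R S T : Type*} [CommRing R] [CommRing S] [CommRing T]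

/-- The splittings of six lines into two triples that are used: the `b`-th one is
`{0, s b 0, s b 1}` and `{s b 2, s b 3, s b 4}` with `s = splitting`. -/
def splitting : Fin 5 → Fin 5 → Fin 6 :=
  ![![4, 5, 1, 2, 3], ![3, 5, 1, 2, 4], ![3, 4, 1, 2, 5], ![2, 5, 1, 3, 4], ![2, 4, 1, 3, 5]]

/-- The quadric through the triple of the `b`-th splitting that contains the line `0`. -/
def nearQuadric (A : Fin 6 → Matrix (Fin 2) (Fin 2) S) (u w : Fin 2 → S) (b : Fin 5) : S :=
  quadric (A 0) (A (splitting b 0)) (A (splitting b 1)) u w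

/-- The quadric through the triple of the `b`-th splitting that avoids the line `0`. -/
def farQuadric (A : Fin 6 → Matrix (Fin 2) (Fin 2) S) (u w : Fin 2 → S) (b : Fin 5) : S :=
  quadric (A (splitting b 2)) (A (splitting b 3)) (A (splitting b 4)) u w

/-- The normal derivative of `nearQuadric` along the line `0`. -/
def nearGradient (A : Fin 6 → Matrix (Fin 2) (Fin 2) S) (b : Fin 5) : Matrix (Fin 2) (Fin 2) S :=
  quadricGradient (A 0) (A (splitting b 0)) (A (splitting b 1))

/-- The matrix `P` for which `farQuadric` restricts to `cross (B u) (P u)` on the line `0`, with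
`B = A 0 - A (splitting b 2)`. -/
def farPolar (A : Fin 6 → Matrix (Fin 2) (Fin 2) S) (b : Fin 5) : Matrix (Fin 2) (Fin 2) S :=
  quadricPolar (A (splitting b 2)) (A (splitting b 3)) (A (splitting b 4)) (A 0)

/-- The matrix of linear combinations, with coefficients `c k (b, a)` in the entry `(k, a)`, of the
quartics through all six lines that the splittings provide; all its entries vanish on the lines. -/
def surfaceMatrix (A : Fin 6 → Matrix (Fin 2) (Fin 2) S) (c : Fin 3 → Fin 5 × Fin 3 → S)
    (u w : Fin 2 → S) : Matrix (Fin 3) (Fin 3) S :=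
  of fun k a => ∑ b, c k (b, a) * (nearQuadric A u w b * farQuadric A u w b)

/-- The value at `(u, w)` of the form of degree `12` with coefficients `c`. Over a polynomial ring
it is the form itself, and over other rings it serves to evaluate the form. -/
def surfaceAt (A : Fin 6 → Matrix (Fin 2) (Fin 2) S) (c : Fin 3 → Fin 5 × Fin 3 → S)
    (u w : Fin 2 → S) : S :=
  (surfaceMatrix A c u w).det

/-- The coefficient of `u₀ ^ (5 - d) * u₁ ^ d` in
`u₀ ^ (2 - a) * u₁ ^ a * (N u)ₑ * cross (B u) (C u)`. -/
def restrictionCoeff (N B C : Matrix (Fin 2) (Fin 2) S) (e : Fin 2) (a : Fin 3) (d : Fin 6) : S :=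
  ∑ i : Fin 2, ∑ j : Fin 2, ∑ l : Fin 2,
    if (i + j + l + a : ℕ) = d then N e i * (B 0 j * C 1 l - B 1 j * C 0 l) else 0

/-- The matrix of the linear conditions on the coefficients `c k` under which the `k`-th row of
`surfaceMatrix A c u w`, paired with `(u₀², u₀ u₁, u₁²)`, vanishes to second order along the line
`0`; the row index `(e, d)` stands for the coefficient of `u₀ ^ (5 - d) * u₁ ^ d` in the `e`-th
normal derivative. -/
def syzygyMatrix (A : Fin 6 → Matrix (Fin 2) (Fin 2) S) :
    Matrix (Fin 2 × Fin 6) (Fin 5 × Fin 3) S :=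
  of fun ed ba => restrictionCoeff (nearGradient A ba.1) (A 0 - A (splitting ba.1 2))
    (farPolar A ba.1) ed.1 ba.2 ed.2

theorem sum_restrictionCoeff_mul (N B C : Matrix (Fin 2) (Fin 2) S) (u : Fin 2 → S) (e : Fin 2)
    (a : Fin 3) : ∑ d : Fin 6, restrictionCoeff N B C e a d * (u 0 ^ (5 - d : ℕ) * u 1 ^ (d : ℕ)) =
      u 0 ^ (2 - a : ℕ) * u 1 ^ (a : ℕ) * ((N *ᵥ u) e * cross (B *ᵥ u) (C *ᵥ u)) := by
  fin_cases a <;>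
  · simp [restrictionCoeff, cross, Fin.sum_univ_succ, mulVec, dotProduct]
    ring

variable {A : Fin 6 → Matrix (Fin 2) (Fin 2) S} {c : Fin 3 → Fin 5 × Fin 3 → S} {u w : Fin 2 → S}

theorem quartic_sub_mem_graphIdealAt_sq (b : Fin 5) :
    nearQuadric A u w b * farQuadric A u w b -
        cross (w - A 0 *ᵥ u) (nearGradient A b *ᵥ u) * farQuadric A u (A 0 *ᵥ u) b ∈
      graphIdealAt (A 0) u w ^ 2 := by
  have near_congr := Ideal.mul_mem_right (farQuadric A u w b) _
    (quadric_sub_cross_gradient_mem_sq (K := A 0) (L := A (splitting b 0))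
      (M := A (splitting b 1)) (u := u) (w := w))
  have far_congr : cross (w - A 0 *ᵥ u) (nearGradient A b *ᵥ u) *
      (farQuadric A u w b - farQuadric A u (A 0 *ᵥ u) b) ∈ graphIdealAt (A 0) u w ^ 2 := by
    rw [sq]
    exact Ideal.mul_mem_mul (cross_mem (sub_mulVec_mem_graphIdealAt _ u w) _)
      quadric_sub_restriction_mem_graphIdealAt
  convert add_mem near_congr far_congr using 1
  simp only [nearQuadric, nearGradient]
  ring

theorem sum_syzygy_eq_zero {c : Fin 5 × Fin 3 → S} (hc : syzygyMatrix A *ᵥ c = 0) (e : Fin 2) :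
    ∑ ba, c ba * (u 0 ^ (2 - ba.2 : ℕ) * u 1 ^ (ba.2 : ℕ) *
      ((nearGradient A ba.1 *ᵥ u) e * farQuadric A u (A 0 *ᵥ u) ba.1)) = 0 := by
  calc _ = ∑ ba, ∑ d, syzygyMatrix A (e, d) ba * c ba * (u 0 ^ (5 - d : ℕ) * u 1 ^ (d : ℕ)) := by
        refine Finset.sum_congr rfl fun ba _ => ?_
        rw [farQuadric, quadric_mulVec, ← farPolar, ← sum_restrictionCoeff_mul, Finset.mul_sum]
        refine Finset.sum_congr rfl fun d _ => ?_
        rw [syzygyMatrix, of_apply]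
        ring
    _ = ∑ d, (syzygyMatrix A *ᵥ c) (e, d) * (u 0 ^ (5 - d : ℕ) * u 1 ^ (d : ℕ)) := by
        rw [Finset.sum_comm]
        simp only [mulVec, dotProduct, Finset.sum_mul]
    _ = 0 := by simp [hc]

theorem surfaceMatrix_mulVec_mem_sq (hc : ∀ k, syzygyMatrix A *ᵥ c k = 0) (k : Fin 3) :
    (surfaceMatrix A c u w *ᵥ fun a => u 0 ^ (2 - a : ℕ) * u 1 ^ (a : ℕ)) k ∈
      graphIdealAt (A 0) u w ^ 2 := by
  have expand : (surfaceMatrix A c u w *ᵥ fun a => u 0 ^ (2 - a : ℕ) * u 1 ^ (a : ℕ)) k =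
      ∑ ba, c k ba * (u 0 ^ (2 - ba.2 : ℕ) * u 1 ^ (ba.2 : ℕ)) *
        (nearQuadric A u w ba.1 * farQuadric A u w ba.1) := by
    rw [Fintype.sum_prod_type_right]
    simp only [mulVec, dotProduct, surfaceMatrix, of_apply, Finset.sum_mul]
    exact Finset.sum_congr rfl fun a _ => Finset.sum_congr rfl fun b _ => by ring
  have first_order : ∑ ba, c k ba * (u 0 ^ (2 - ba.2 : ℕ) * u 1 ^ (ba.2 : ℕ)) *
      (cross (w - A 0 *ᵥ u) (nearGradient A ba.1 *ᵥ u) * farQuadric A u (A 0 *ᵥ u) ba.1) = 0 := by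
    have h0 := sum_syzygy_eq_zero (u := u) (hc k) 0
    have h1 := sum_syzygy_eq_zero (u := u) (hc k) 1
    have := congrArg₂ (fun x y => (w - A 0 *ᵥ u) 0 * y - (w - A 0 *ᵥ u) 1 * x) h0 h1
    simp only [Finset.mul_sum, ← Finset.sum_sub_distrib, mul_zero, sub_zero] at this
    rw [← this]
    refine Finset.sum_congr rfl fun ba _ => ?_
    rw [cross]
    ring
  rw [expand, ← sub_zero (∑ ba, _), ← first_order, ← Finset.sum_sub_distrib]
  refine sum_mem fun ba _ => ?_
  rw [← mul_sub]
  exact Ideal.mul_mem_left _ _ (quartic_sub_mem_graphIdealAt_sq ba.1)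

theorem surfaceMatrix_mem_graphIdealAt (i : Fin 6) (k a : Fin 3) :
    surfaceMatrix A c u w k a ∈ graphIdealAt (A i) u w := by
  have covered : ∀ b i, (i = 0 ∨ i = splitting b 0 ∨ i = splitting b 1) ∨
      (i = splitting b 2 ∨ i = splitting b 3 ∨ i = splitting b 4) := by decide
  rw [surfaceMatrix, of_apply]
  refine Ideal.sum_mem _ fun b _ => Ideal.mul_mem_left _ _ ?_
  rcases covered b i with (rfl | rfl | rfl) | (rfl | rfl | rfl)
  · exact Ideal.mul_mem_right _ _ quadric_mem_graphIdealAt_left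
  · exact Ideal.mul_mem_right _ _ quadric_mem_graphIdealAt_middle
  · exact Ideal.mul_mem_right _ _ quadric_mem_graphIdealAt_right
  · exact Ideal.mul_mem_left _ _ quadric_mem_graphIdealAt_left
  · exact Ideal.mul_mem_left _ _ quadric_mem_graphIdealAt_middle
  · exact Ideal.mul_mem_left _ _ quadric_mem_graphIdealAt_right

theorem surfaceAt_mem_graphIdealAt_cube (i : Fin 6) :
    surfaceAt A c u w ∈ graphIdealAt (A i) u w ^ 3 := by
  have mem_pow_one (k a : Fin 3) : surfaceMatrix A c u w k a ∈ graphIdealAt (A i) u w ^ 1 := by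
    rw [pow_one]
    exact surfaceMatrix_mem_graphIdealAt i k a
  exact det_mem_pow_sum mem_pow_one

theorem sq_mul_surfaceAt_mem_graphIdealAt_pow_four (hc : ∀ k, syzygyMatrix A *ᵥ c k = 0) :
    u 0 ^ 2 * surfaceAt A c u w ∈ graphIdealAt (A 0) u w ^ 4 := by
  simpa [surfaceAt] using mul_det_mem_pow_of_mulVec_mem_sq (surfaceMatrix_mem_graphIdealAt 0)
    (surfaceMatrix_mulVec_mem_sq hc) 0

theorem map_restrictionCoeff (f : S →+* T) (N B C : Matrix (Fin 2) (Fin 2) S) (e : Fin 2)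
    (a : Fin 3) (d : Fin 6) : f (restrictionCoeff N B C e a d) =
      restrictionCoeff (N.map f) (B.map f) (C.map f) e a d := by
  simp only [restrictionCoeff, map_sum, apply_ite f, map_mul, map_sub, map_zero, map_apply]

theorem map_syzygyMatrix (f : S →+* T) :
    (syzygyMatrix A).map f = syzygyMatrix fun i => (A i).map f := by
  ext ed ba
  simp only [syzygyMatrix, map_apply, of_apply, map_restrictionCoeff, nearGradient, farPolar,
    map_quadricGradient, map_quadricPolar]
  congr 1
  simp only [← RingHom.mapMatrix_apply, map_sub]

theorem map_surfaceAt (f : S →+* T) : f (surfaceAt A c u w) =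
    surfaceAt (fun i => (A i).map f) (fun k => f ∘ c k) (f ∘ u) (f ∘ w) := by
  rw [surfaceAt, RingHom.map_det, surfaceAt]
  congr 1
  ext k a
  simp only [surfaceMatrix, nearQuadric, farQuadric, RingHom.mapMatrix_apply, map_apply, of_apply,
    map_sum, map_mul, map_quadric, Function.comp_apply]

theorem surfaceAt_smul (r : S) :
    surfaceAt A (fun k => r • c k) u w = r ^ 3 * surfaceAt A c u w := by
  have smul_matrix : surfaceMatrix A (fun k => r • c k) u w = r • surfaceMatrix A c u w := by
    ext k a
    simp only [surfaceMatrix, of_apply, Matrix.smul_apply, Pi.smul_apply, smul_eq_mul,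
      Finset.mul_sum, mul_assoc]
  rw [surfaceAt, smul_matrix, det_smul, Fintype.card_fin, surfaceAt]

/-- The form of degree `12` with values `surfaceAt A c`. It vanishes to order `3` along all six
lines and, for rows of `c` in the kernel of `syzygyMatrix A`, to order `4` along the line `0`. -/
def surface (A : Fin 6 → Matrix (Fin 2) (Fin 2) R) (c : Fin 3 → Fin 5 × Fin 3 → R) :
    MvPolynomial (Fin 2 ⊕ Fin 2) R :=
  surfaceAt (fun i => (A i).map C) (fun k => C ∘ c k) (fun j => X (.inl j)) (fun i => X (.inr i))

theorem eval_surface (A : Fin 6 → Matrix (Fin 2) (Fin 2) R) (c : Fin 3 → Fin 5 × Fin 3 → R)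
    (u w : Fin 2 → R) : eval (Sum.elim u w) (surface A c) = surfaceAt A c u w := by
  rw [surface, map_surfaceAt]
  congr <;> ext <;> simp

theorem isHomogeneous_surface (A : Fin 6 → Matrix (Fin 2) (Fin 2) R)
    (c : Fin 3 → Fin 5 × Fin 3 → R) : (surface A c).IsHomogeneous 12 := by
  have hquadric (K L M : Matrix (Fin 2) (Fin 2) R) :
      (quadric (K.map C) (L.map C) (M.map C) (fun j => X (.inl j))
        fun i => X (.inr i : Fin 2 ⊕ Fin 2)).IsHomogeneous 2 :=
    isHomogeneous_quadric (fun j => isHomogeneous_X R _) (fun i => isHomogeneous_X R _)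
  have hentry (k a : Fin 3) : (surfaceMatrix (fun i => (A i).map C) (fun k => C ∘ c k)
      (fun j => X (.inl j)) (fun i => X (.inr i : Fin 2 ⊕ Fin 2)) k a).IsHomogeneous 4 := by
    rw [surfaceMatrix, of_apply]
    refine IsHomogeneous.sum _ _ _ fun b _ => IsHomogeneous.C_mul ?_ (c k (b, a))
    exact (hquadric _ _ _).mul (hquadric _ _ _)
  rw [surface, surfaceAt]
  exact isHomogeneous_det hentry

theorem surface_mem_graphIdeal_cube (A : Fin 6 → Matrix (Fin 2) (Fin 2) R)
    (c : Fin 3 → Fin 5 × Fin 3 → R) (i : Fin 6) : surface A c ∈ graphIdeal (A i) ^ 3 := by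
  rw [surface, graphIdeal]
  exact surfaceAt_mem_graphIdealAt_cube (A := fun i => (A i).map C) i

theorem surface_mem_graphIdeal_pow_four [IsDomain R] {A : Fin 6 → Matrix (Fin 2) (Fin 2) R}
    {c : Fin 3 → Fin 5 × Fin 3 → R} (hc : ∀ k, syzygyMatrix A *ᵥ c k = 0) :
    surface A c ∈ graphIdeal (A 0) ^ 4 := by
  have hC (k) : syzygyMatrix (fun i => (A i).map (C (σ := Fin 2 ⊕ Fin 2))) *ᵥ (C ∘ c k) = 0 := by
    rw [← map_syzygyMatrix, ← comp_mulVec, hc]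
    ext
    simp
  refine mem_graphIdeal_pow_of_rename_mul_mem (pow_ne_zero 2 (X_ne_zero 0)) ?_
  rw [map_pow, rename_X]
  exact (sq_mul_surfaceAt_mem_graphIdealAt_pow_four (u := fun j => X (.inl j))
    (w := fun i => X (.inr i)) hC :)

end Surface

section Existence

/-- A sextuple of lines with integer slopes at which the surface can be computed explicitly. -/
def sampleSlope : Fin 6 → Matrix (Fin 2) (Fin 2) ℤ :=
  ![0, !![0, 1; 1, -1], !![0, -1; -1, -1], !![0, 1; 1, 0], 1, -1]

/-- A right inverse of `syzygyMatrix sampleSlope` up to the factor `4`; it witnesses that this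
matrix has full rank. -/
def sampleInverse : Matrix (Fin 5 × Fin 3) (Fin 2 × Fin 6) ℤ :=
  !![-2, -1, -2, 0, -1, -1, -1, 2, 1, 1, 1, 1;
    0, -2, -1, -1, -1, 0, 2, 0, 1, 1, 0, 1;
    -1, 0, 0, -1, 0, 0, 0, 0, 0, 0, 0, -1;
    -1, 0, 0, 0, 0, 0, 1, 0, 0, 0, 0, 0;
    -3, 1, 0, 0, 0, 0, -1, 2, -2, 0, -1, 0;
    2, -1, 2, -1, 1, 0, 3, -2, 0, -2, 0, -1;
    -1, 0, 0, 0, 0, 0, -1, 0, 0, 0, 0, 0;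
    1, -1, 0, 0, 0, 0, 1, 0, 0, 0, -1, 0;
    0, 1, 0, 1, 1, 2, -1, 0, 0, 0, 0, -1;
    0, 0, 0, 0, 0, 0, 0, 2, 0, 0, -2, 0;
    0, 0, -2, 2, 0, 2, 0, 0, 2, 2, 4, 0;
    -2, -2, 0, -4, -2, -4, 2, 0, 0, 0, 0, 2;
    -4, 4, 0, 0, 0, 0, -4, 2, -4, 0, -2, 0;
    0, 0, 2, -2, 0, -2, 0, 0, -2, -2, 0, 0;
    2, -2, 0, 0, -2, 0, 2, 0, 0, 0, 0, 2].submatrix finProdFinEquiv finProdFinEquiv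

/-- A basis of the kernel of `syzygyMatrix sampleSlope`. -/
def sampleKernel : Fin 3 → Fin 5 × Fin 3 → ℤ :=
  !![1, 0, -1, 0, 0, 0, 0, 0, 0, 0, 2, -2, 0, 2, 2;
    1, 0, 0, 0, -1, -2, 0, 1, 0, 2, -2, 0, -2, -2, 0;
    0, 0, 0, 0, 1, 1, 0, 1, -1, 2, -4, 2, 2, 4, 2].submatrix id finProdFinEquiv

theorem syzygyMatrix_sampleSlope_mul_sampleInverse :
    syzygyMatrix sampleSlope * sampleInverse = (4 : ℤ) • 1 := by
  decide +kernel

theorem syzygyMatrix_sampleSlope_mulVec_sampleKernel (k : Fin 3) :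
    syzygyMatrix sampleSlope *ᵥ sampleKernel k = 0 := by
  revert k
  decide +kernel

theorem surfaceAt_sample : surfaceAt sampleSlope sampleKernel 0 (Pi.single 0 1) = 64 := by
  decide +kernel

variable {k S : Type*} [Field k] [CharZero k] [CommRing S]

theorem exists_surface_ne_zero (f : S →+* k) {A : Fin 6 → Matrix (Fin 2) (Fin 2) S}
    (hA : ∀ i, (A i).map f = (sampleSlope i).map (Int.castRingHom k)) :
    ∃ c : Fin 3 → Fin 5 × Fin 3 → S, (∀ l, syzygyMatrix A *ᵥ c l = 0) ∧ surface A c ≠ 0 := by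
  have map_syzygy : (syzygyMatrix A).map f =
      (syzygyMatrix sampleSlope).map (Int.castRingHom k) := by
    rw [map_syzygyMatrix, map_syzygyMatrix]
    simp only [hA]
  have comp_intCast {ι : Type} (v : ι → ℤ) : f ∘ Int.castRingHom S ∘ v = Int.castRingHom k ∘ v :=
    funext fun i => map_intCast f (v i)
  let N : Matrix (Fin 5 × Fin 3) (Fin 2 × Fin 6) S := sampleInverse.map (Int.castRingHom S)
  have map_N : N.map f = sampleInverse.map (Int.castRingHom k) :=
    funext fun ba => comp_intCast (sampleInverse ba)
  have map_det : f (syzygyMatrix A * N).det = 4 ^ 12 := by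
    rw [RingHom.map_det, RingHom.mapMatrix_apply, Matrix.map_mul, map_syzygy, map_N,
      ← Matrix.map_mul, syzygyMatrix_sampleSlope_mul_sampleInverse, ← RingHom.mapMatrix_apply,
      ← RingHom.map_det, det_smul]
    norm_num
  have lift (l : Fin 3) := exists_mulVec_eq_zero_lift f (syzygyMatrix A) N
    (Int.castRingHom S ∘ sampleKernel l) (by
      rw [comp_mulVec, map_syzygy, comp_intCast, ← comp_mulVec,
        syzygyMatrix_sampleSlope_mulVec_sampleKernel]
      ext
      simp)
  choose c hc hfc using lift
  have value : f (eval (Sum.elim (Int.castRingHom S ∘ 0) (Int.castRingHom S ∘ Pi.single 0 1))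
      (surface A c)) = (4 ^ 12) ^ 3 * 64 := by
    rw [eval_surface, map_surfaceAt]
    simp only [hA, hfc, map_det, comp_intCast]
    rw [surfaceAt_smul, ← map_surfaceAt, surfaceAt_sample]
    simp
  refine ⟨c, hc, fun hzero => ?_⟩
  rw [hzero, map_zero, map_zero] at value
  norm_num at value

theorem exists_surface (A : Fin 6 → Matrix (Fin 2) (Fin 2) k) :
    ∃ Q : MvPolynomial (Fin 2 ⊕ Fin 2) k, Q ≠ 0 ∧ Q.IsHomogeneous 12 ∧
      ∀ i, Q ∈ graphIdeal (A i) ^ (if i = 0 then 4 else 3) := by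
  let S : Fin 6 → Matrix (Fin 2) (Fin 2) k := fun i => (sampleSlope i).map (Int.castRingHom k)
  let family : Fin 6 → Matrix (Fin 2) (Fin 2) (Polynomial k) := fun i =>
    (A i).map Polynomial.C + (Polynomial.X : Polynomial k) • (S i - A i).map Polynomial.C
  have family_zero (i : Fin 6) : (family i).map (Polynomial.evalRingHom (0 : k)) = A i := by
    ext
    simp [family]
  have family_one (i : Fin 6) : (family i).map (Polynomial.evalRingHom (1 : k)) = S i := by
    ext
    simp [family]
  obtain ⟨c, hc, hne⟩ := exists_surface_ne_zero (A := family) (Polynomial.evalRingHom (1 : k))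
    family_one
  have hmem (i : Fin 6) : surface family c ∈ graphIdeal (family i) ^ (if i = 0 then 4 else 3) := by
    split_ifs with hi
    · exact hi ▸ surface_mem_graphIdeal_pow_four hc
    · exact surface_mem_graphIdeal_cube family c i
  obtain ⟨Q, hQ, hhom, hQmem⟩ :=
    exists_specialization (0 : k) hne (isHomogeneous_surface family c) hmem
  exact ⟨Q, hQ, hhom, fun i => family_zero i ▸ hQmem i⟩

theorem exists_product_of_surfaces (A : Fin 6 → Matrix (Fin 2) (Fin 2) k) :
    ∃ Q : MvPolynomial (Fin 2 ⊕ Fin 2) k, Q ≠ 0 ∧ Q.IsHomogeneous 72 ∧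
      ∀ i, Q ∈ graphIdeal (A i) ^ 19 := by
  choose Q hQ hhom hmem using fun j => exists_surface (A ∘ Equiv.swap 0 j)
  refine ⟨∏ j, Q j, Finset.prod_ne_zero_iff.2 fun j _ => hQ j, ?_, fun i => ?_⟩
  · exact IsHomogeneous.prod Finset.univ Q (fun _ => 12) fun j _ => hhom j
  · have mult_sum : ∑ j, (if Equiv.swap 0 j i = 0 then 4 else 3) = 19 := by
      revert i
      decide
    rw [← mult_sum, ← Finset.prod_pow_eq_pow_sum]
    refine Ideal.prod_mem_prod fun j _ => ?_
    simpa using hmem j (Equiv.swap 0 j i)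

end Existence

section Chart

theorem exists_common_isCompl {ι k V : Type*} [Finite ι] [Field k] [Infinite k] [AddCommGroup V]
    [Module k V] [FiniteDimensional k V] {n : ℕ} {L : ι → Submodule k V}
    (hL : ∀ i, Module.finrank k (L i) = n) : ∃ K, ∀ i, IsCompl (L i) K := by
  induction hcodim : Module.finrank k V - n generalizing n L with
  | zero =>
    refine ⟨⊥, fun i => ?_⟩
    have hle := hL i ▸ (L i).finrank_le
    rw [Submodule.eq_top_of_finrank_eq (S := L i) (by rw [hL]; omega)]
    exact isCompl_top_bot
  | succ d ih =>
    obtain ⟨v, hv⟩ : ∃ v, ∀ i, v ∉ L i := by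
      by_contra! hcover
      obtain ⟨i, hi⟩ := Subspace.exists_eq_top_of_iUnion_eq_univ (p := L)
        (Set.eq_univ_of_forall fun v => Set.mem_iUnion.2 (hcover v))
      have := hL i
      rw [hi, finrank_top] at this
      omega
    have hdisj (i) : Disjoint (L i) (k ∙ v) := Submodule.disjoint_span_singleton_of_notMem (hv i)
    have hsup (i) : Module.finrank k ↥(L i ⊔ k ∙ v) = n + 1 := by
      rw [Submodule.finrank_sup_span_singleton (hv i), hL i]
    obtain ⟨K, hK⟩ := ih hsup (by omega)
    exact ⟨k ∙ v ⊔ K, fun i => (hdisj i).isCompl_sup_right_of_isCompl_sup_left (hK i)⟩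

theorem exists_graph_coordinates {ι k V σ τ : Type*} [Finite ι] [Nonempty ι] [Field k] [Infinite k]
    [AddCommGroup V] [Module k V] [FiniteDimensional k V] [Fintype σ] [Fintype τ]
    (hV : Module.finrank k V = Fintype.card σ + Fintype.card τ) {L : ι → Submodule k V}
    (hL : ∀ i, Module.finrank k (L i) = Fintype.card σ) :
    ∃ (e : V ≃ₗ[k] σ ⊕ τ → k) (A : ι → Matrix τ σ k),
      ∀ i, ∀ v ∈ L i, e v ∘ Sum.inr = A i *ᵥ (e v ∘ Sum.inl) := by
  classical
  obtain ⟨K, hK⟩ := exists_common_isCompl hL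
  obtain ⟨i₀⟩ := ‹Nonempty ι›
  have hKrank : Module.finrank k K = Fintype.card τ := by
    have := Submodule.finrank_add_eq_of_isCompl (hK i₀)
    rw [hL, hV] at this
    omega
  let split := (Submodule.prodEquivOfIsCompl (L i₀) K (hK i₀)).symm
  let eL : L i₀ ≃ₗ[k] σ → k := LinearEquiv.ofFinrankEq _ _ (by simp [hL])
  let eK : K ≃ₗ[k] τ → k := LinearEquiv.ofFinrankEq _ _ (by simp [hKrank])
  let e := split ≪≫ₗ eL.prodCongr eK ≪≫ₗ (LinearEquiv.sumArrowLequivProdArrow σ τ k k).symm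
  have mem_of_base_eq_zero (v : V) (hv : e v ∘ Sum.inl = 0) : v ∈ K :=
    (Submodule.prodEquivOfIsCompl_symm_apply_fst_eq_zero _ _ (hK i₀)).1 (eL.map_eq_zero_iff.1 hv)
  have slope (i) : ∃ A : Matrix τ σ k, ∀ v ∈ L i, e v ∘ Sum.inr = A *ᵥ (e v ∘ Sum.inl) := by
    let base : L i →ₗ[k] σ → k := LinearMap.funLeft k k Sum.inl ∘ₗ e.toLinearMap ∘ₗ (L i).subtype
    have base_injective : LinearMap.ker base = ⊥ :=
      LinearMap.ker_eq_bot'.2 fun v hv => Subtype.ext <|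
        Submodule.disjoint_def.1 (hK i).disjoint v v.2 (mem_of_base_eq_zero v hv)
    obtain ⟨lift, hlift⟩ := base.exists_leftInverse_of_injective base_injective
    refine ⟨LinearMap.toMatrix' (LinearMap.funLeft k k Sum.inr ∘ₗ e.toLinearMap ∘ₗ
      (L i).subtype ∘ₗ lift), fun v hv => ?_⟩
    have : lift (e v ∘ Sum.inl) = ⟨v, hv⟩ := LinearMap.congr_fun hlift ⟨v, hv⟩
    ext j
    simp [LinearMap.toMatrix'_mulVec, this, LinearMap.funLeft_apply]
  choose A hA using slope
  exact ⟨e, A, hA⟩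

variable {ι : Type*}

/-- The polynomial on `ℂ⁴` that is a given one in the linear coordinates `e`. -/
def pullback (e : C4 ≃ₗ[ℂ] ι → ℂ) : MvPolynomial ι ℂ →ₐ[ℂ] R3 :=
  aeval (LinearMap.toMatrix' e.toLinearMap).toMvPolynomial

theorem eval_pullback (e : C4 ≃ₗ[ℂ] ι → ℂ) (Q : MvPolynomial ι ℂ) (v : C4) :
    eval v (pullback e Q) = eval (e v) Q := by
  have coordinate (i : ι) :
      aeval v ((LinearMap.toMatrix' e.toLinearMap).toMvPolynomial i) = e v i := by
    rw [aeval_eq_eval, Matrix.toMvPolynomial_eval_eq_apply, LinearMap.toMatrix'_mulVec]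
    rfl
  simp_all [pullback, ← aeval_eq_eval, aeval_bind₁]

theorem pullback_ne_zero (e : C4 ≃ₗ[ℂ] ι → ℂ) {Q : MvPolynomial ι ℂ} (hQ : Q ≠ 0) :
    pullback e Q ≠ 0 := by
  contrapose! hQ
  refine MvPolynomial.funext fun x => ?_
  rw [← e.apply_symm_apply x, ← eval_pullback, hQ, map_zero, map_zero]

theorem isHomogeneous_pullback (e : C4 ≃ₗ[ℂ] ι → ℂ) {Q : MvPolynomial ι ℂ} {d : ℕ}
    (hQ : Q.IsHomogeneous d) : (pullback e Q).IsHomogeneous d :=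
  one_mul d ▸ hQ.aeval _ (Matrix.toMvPolynomial_isHomogeneous _)

theorem pullback_mem_lineIdeal_pow {σ τ : Type*} [Fintype σ] {e : C4 ≃ₗ[ℂ] σ ⊕ τ → ℂ}
    {A : Matrix τ σ ℂ} {L : Submodule ℂ C4}
    (hL : ∀ v ∈ L, e v ∘ Sum.inr = A *ᵥ (e v ∘ Sum.inl)) {Q : MvPolynomial (σ ⊕ τ) ℂ} {m : ℕ}
    (hQ : Q ∈ graphIdeal A ^ m) : pullback e Q ∈ lineIdeal L ^ m := by
  have hle : (graphIdeal A).map (pullback e) ≤ lineIdeal L := by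
    rw [Ideal.map_le_iff_le_comap, graphIdeal, graphIdealAt, Ideal.span_le]
    rintro _ ⟨i, rfl⟩ v hv
    rw [eval_pullback]
    have := congrFun (hL v hv) i
    simp_all [mulVec, dotProduct]
  refine Ideal.pow_right_mono hle m ?_
  rw [← Ideal.map_pow]
  exact Ideal.mem_map_of_mem _ hQ

end Chart

theorem stmt_16_general (L : Fin 6 → Submodule ℂ C4)
    (hdim : ∀ i, Module.finrank ℂ ↥(L i) = 2) :
    (∃ F : R3, F ≠ 0 ∧ F.IsHomogeneous 72 ∧ ∀ i, F ∈ (lineIdeal (L i)) ^ 19) ∧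
    alphaDeg (⨅ i, (lineIdeal (L i)) ^ 19) ≤ 72 := by
  obtain ⟨e, A, hA⟩ := exists_graph_coordinates (σ := Fin 2) (τ := Fin 2) (by simp) hdim
  obtain ⟨Q, hQ, hhom, hmem⟩ := exists_product_of_surfaces A
  have pullback_mem (i : Fin 6) : pullback e Q ∈ lineIdeal (L i) ^ 19 :=
    pullback_mem_lineIdeal_pow (hA i) (hmem i)
  have pullback_ne : pullback e Q ≠ 0 := pullback_ne_zero e hQ
  have pullback_hom : (pullback e Q).IsHomogeneous 72 := isHomogeneous_pullback e hhom
  exact ⟨⟨pullback e Q, pullback_ne, pullback_hom, pullback_mem⟩,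
    Nat.sInf_le ⟨pullback e Q, (Submodule.mem_iInf _).2 pullback_mem, pullback_ne, pullback_hom⟩⟩

/-- For six pairwise skew lines in `P^3` there is a nonzero form of degree `72`
with multiplicity `19` along each line; consequently `α(I^{(19)}) ≤ 72`, where
`I^{(m)} = ⋂ᵢ I(Lᵢ)^m`, giving the bound `72/19` for the Waldschmidt constant. -/
theorem stmt_16 (L : Fin 6 → Submodule ℂ C4)
    (hdim : ∀ i, Module.finrank ℂ ↥(L i) = 2)
    (hskew : ∀ i j, i ≠ j → L i ⊓ L j = ⊥) :
    (∃ F : R3, F ≠ 0 ∧ F.IsHomogeneous 72 ∧ ∀ i, F ∈ (lineIdeal (L i)) ^ 19) ∧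
    alphaDeg (⨅ i, (lineIdeal (L i)) ^ 19) ≤ 72 :=
  stmt_16_general L hdim
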